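/- For every fixed integer t ≥ 1 and every ε > 0 there exists n₀ such that for all n ≥ n₀ and every p with 800·n·2^{2n−2t}·(log n)/(n−t)! ≤ p ≤ 1, with probability at least 1 − ε every t-intersecting subfamily of (S_n)_p of maximum size is trivial. -/

import Mathlib

/-- The number of indices on which two permutations of `Fin n` agree. -/
def agreements {n : ℕ} (σ π : Equiv.Perm (Fin n)) : ℕ :=
  (Finset.univ.filter (fun i => σ i = π i)).card

/-- A family of permutations is `t`-intersecting if any two of its members agree
on at least `t` indices. -/
def IsTIntersecting {n : ℕ} (t : ℕ) (F : Finset (Equiv.Perm (Fin n))) : Prop :=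
  ∀ σ ∈ F, ∀ π ∈ F, t ≤ agreements σ π

/-- A family of permutations is trivial if there is a `t`-set of indices `I` and
prescribed values `x i` such that every member sends each `i ∈ I` to `x i`. -/
def IsTrivial {n : ℕ} (t : ℕ) (F : Finset (Equiv.Perm (Fin n))) : Prop :=
  ∃ I : Finset (Fin n), I.card = t ∧ ∃ x : Fin n → Fin n,
    ∀ σ ∈ F, ∀ i ∈ I, σ i = x i

-- `randomSubsetProb ground p P` is the probability that the `p`-random subset of
-- `ground` (each element kept independently with probability `p`) satisfies `P`.
open Classical in
noncomputable def randomSubsetProb {α : Type*} (ground : Finset α) (p : ℝ)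
    (P : Finset α → Prop) : ℝ :=
  ∑ W ∈ ground.powerset,
    if P W then p ^ W.card * (1 - p) ^ (ground.card - W.card) else 0

/-! A nontrivial `t`-intersecting family `F ⊆ S_n` has at most `3/4 * (n - t)!` members once `n` is
large. Indeed, regarding permutations as their graphs in `[n] × [n]`, all but a few members of `F`
contain one of a collection of small spread kernels, over each of which `F` looks random. Members
over any two kernels can be chosen disjoint off the kernels, so the kernels themselves are
`t`-intersecting. Either they share a `t`-set, and a permutation in `F` not containing it excludes a
positive proportion of the permutations that do contain it; or a bounded number of sets of size
`t + 1` covers the kernels, and only `O((n - t - 1)!)` permutations contain one of them.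

A maximal `t`-intersecting family consists of the permutations that agree in `t` places with every
member of a subfamily `T` of size at most `2 ^ n`: in a minimal such `T` each member has a witness
violating only it, and a rank argument bounds such systems. So there are at most `(n! + 1) ^ 2 ^ n`
maximal families, and a union bound over Chernoff estimates shows that with high probability the
random set meets each nontrivial one in fewer elements than one fixed trivial family of size
`(n - t)!`. -/

open Finset
open scoped Nat

section RandomSubset

variable {α : Type*} {s : Finset α} {p : ℝ}

/-- The probability that the `p`-random subset of `s` equals `W`. -/
noncomputable def randomSubsetWeight (s : Finset α) (p : ℝ) (W : Finset α) : ℝ :=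
  p ^ #W * (1 - p) ^ (#s - #W)

/-- The expectation of `f` at the `p`-random subset of `s`. -/
noncomputable def randomSubsetExpect (s : Finset α) (p : ℝ) (f : Finset α → ℝ) : ℝ :=
  ∑ W ∈ s.powerset, randomSubsetWeight s p W * f W

lemma randomSubsetWeight_nonneg (hp₀ : 0 ≤ p) (hp₁ : p ≤ 1) (W : Finset α) :
    0 ≤ randomSubsetWeight s p W := by
  have : 0 ≤ 1 - p := sub_nonneg.2 hp₁
  unfold randomSubsetWeight
  positivity

lemma randomSubsetWeight_le_mul_inv_pow [DecidableEq α] (hp₀ : 0 < p) (hp₁ : p ≤ 1)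
    {W T : Finset α} (hWT : Disjoint W T) (hs : W ∪ T ⊆ s) :
    randomSubsetWeight s p W ≤ randomSubsetWeight s p (W ∪ T) * p⁻¹ ^ #T := by
  have h1p : 0 ≤ 1 - p := sub_nonneg.2 hp₁
  have hcard : #s - #W = (#s - #(W ∪ T)) + #T := by
    have := card_le_card hs
    rw [card_union_of_disjoint hWT] at this ⊢
    omega
  calc randomSubsetWeight s p W
      = p ^ #W * ((1 - p) ^ (#s - #(W ∪ T)) * (1 - p) ^ #T) := by
        rw [randomSubsetWeight, hcard, pow_add]
    _ ≤ p ^ #W * ((1 - p) ^ (#s - #(W ∪ T)) * 1) := by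
        gcongr
        exact pow_le_one₀ h1p (by linarith)
    _ = randomSubsetWeight s p (W ∪ T) * p⁻¹ ^ #T := by
        rw [randomSubsetWeight, card_union_of_disjoint hWT, pow_add, inv_pow]
        field_simp

lemma randomSubsetExpect_mono (hp₀ : 0 ≤ p) (hp₁ : p ≤ 1) {f g : Finset α → ℝ}
    (h : ∀ W ⊆ s, f W ≤ g W) : randomSubsetExpect s p f ≤ randomSubsetExpect s p g :=
  sum_le_sum fun W hW => mul_le_mul_of_nonneg_left (h W (mem_powerset.1 hW))
    (randomSubsetWeight_nonneg hp₀ hp₁ W)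

lemma randomSubsetExpect_sum {ι : Type*} (I : Finset ι) (f : ι → Finset α → ℝ) :
    randomSubsetExpect s p (fun W => ∑ i ∈ I, f i W) = ∑ i ∈ I, randomSubsetExpect s p (f i) := by
  simp only [randomSubsetExpect, mul_sum]
  exact sum_comm

lemma randomSubsetExpect_add (f g : Finset α → ℝ) :
    randomSubsetExpect s p (fun W => f W + g W) =
      randomSubsetExpect s p f + randomSubsetExpect s p g := by
  simp only [randomSubsetExpect, mul_add, sum_add_distrib]

lemma randomSubsetExpect_const_mul (c : ℝ) (f : Finset α → ℝ) :
    randomSubsetExpect s p (fun W => c * f W) = c * randomSubsetExpect s p f := by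
  simp only [randomSubsetExpect, mul_sum]
  exact sum_congr rfl fun W _ => mul_left_comm _ _ _

lemma randomSubsetExpect_insert [DecidableEq α] {a : α} (ha : a ∉ s) (f : Finset α → ℝ) :
    randomSubsetExpect (insert a s) p f =
      (1 - p) * randomSubsetExpect s p f +
        p * randomSubsetExpect s p (fun W => f (insert a W)) := by
  rw [randomSubsetExpect, sum_powerset_insert ha, randomSubsetExpect, randomSubsetExpect, mul_sum,
    mul_sum]
  congr 1 <;> refine sum_congr rfl fun W hW => ?_
  · have hcard : #(insert a s) - #W = #s - #W + 1 := by
      have := card_le_card (mem_powerset.1 hW)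
      rw [card_insert_of_notMem ha]
      omega
    rw [randomSubsetWeight, randomSubsetWeight, hcard]
    ring
  · have haW : a ∉ W := fun h => ha (mem_powerset.1 hW h)
    rw [randomSubsetWeight, randomSubsetWeight, card_insert_of_notMem ha,
      card_insert_of_notMem haW, Nat.add_sub_add_right]
    ring

lemma randomSubsetExpect_prod (g : α → ℝ) :
    randomSubsetExpect s p (fun W => ∏ x ∈ W, g x) = ∏ x ∈ s, (p * g x + (1 - p)) := by
  classical
  rw [prod_add, randomSubsetExpect]
  refine sum_congr rfl fun W hW => ?_
  rw [prod_mul_distrib, prod_const, prod_const, card_sdiff_of_subset (mem_powerset.1 hW),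
    randomSubsetWeight]
  ring

lemma randomSubsetExpect_const (c : ℝ) : randomSubsetExpect s p (fun _ => c) = c := by
  have h := randomSubsetExpect_prod (s := s) (p := p) fun _ => 1
  simp only [prod_const_one, mul_one, add_sub_cancel] at h
  simpa only [mul_one, h] using randomSubsetExpect_const_mul (s := s) (p := p) c fun _ => 1

lemma randomSubsetExpect_pow_card_inter [DecidableEq α] (A : Finset α) (z : ℝ) :
    randomSubsetExpect s p (fun W => z ^ #(W ∩ A)) = (p * z + (1 - p)) ^ #(s ∩ A) := by
  have hpow (W : Finset α) : z ^ #(W ∩ A) = ∏ x ∈ W, if x ∈ A then z else 1 := by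
    rw [prod_ite_mem, prod_const]
  have hfactor (x : α) : p * (if x ∈ A then z else 1) + (1 - p) =
      if x ∈ A then p * z + (1 - p) else 1 := by
    split_ifs <;> ring
  simp only [hpow, randomSubsetExpect_prod, hfactor]
  rw [prod_ite_mem, prod_const]

lemma randomSubsetExpect_union [DecidableEq α] (s : Finset α) (p q : ℝ) (f : Finset α → ℝ) :
    randomSubsetExpect s p (fun V => randomSubsetExpect s q fun W => f (V ∪ W)) =
      randomSubsetExpect s (p + q - p * q) f := by
  induction s using Finset.induction_on generalizing f with
  | empty => simp [randomSubsetExpect, randomSubsetWeight]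
  | insert a s ha ih =>
    simp only [randomSubsetExpect_insert ha, randomSubsetExpect_add, randomSubsetExpect_const_mul,
      insert_union, union_insert, insert_idem, ih, ih fun W => f (insert a W)]
    ring

lemma randomSubsetExpect_sdiff [DecidableEq α] (f : Finset α → ℝ) :
    randomSubsetExpect s p (fun W => f (s \ W)) = randomSubsetExpect s (1 - p) f := by
  refine sum_nbij' (s \ ·) (s \ ·) (by simp) (by simp) ?_ ?_ fun W hW => ?_
  · exact fun W hW => Finset.sdiff_sdiff_eq_self (mem_powerset.1 hW)
  · exact fun W hW => Finset.sdiff_sdiff_eq_self (mem_powerset.1 hW)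
  · have hsub := mem_powerset.1 hW
    have hcard : #s - (#s - #W) = #W := Nat.sub_sub_self (card_le_card hsub)
    simp only [randomSubsetWeight, card_sdiff_of_subset hsub, hcard, sub_sub_cancel]
    ring

lemma randomSubsetProb_eq_expect (P : Finset α → Prop) :
    randomSubsetProb s p P = randomSubsetExpect s p ({W | P W}.indicator 1) := by
  refine sum_congr rfl fun W _ => ?_
  by_cases h : P W <;> simp [h, randomSubsetWeight]

lemma randomSubsetProb_le_sum (hp₀ : 0 ≤ p) (hp₁ : p ≤ 1) {ι : Type*} (I : Finset ι)
    {P : Finset α → Prop} {Q : ι → Finset α → Prop} (h : ∀ W ⊆ s, P W → ∃ i ∈ I, Q i W) :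
    randomSubsetProb s p P ≤ ∑ i ∈ I, randomSubsetProb s p (Q i) := by
  simp only [randomSubsetProb_eq_expect, ← randomSubsetExpect_sum]
  refine randomSubsetExpect_mono hp₀ hp₁ fun W hW => ?_
  have hnonneg (j : ι) : 0 ≤ ({W | Q j W}.indicator 1 W : ℝ) :=
    Set.indicator_nonneg (fun _ _ => zero_le_one) W
  by_cases hP : P W
  · obtain ⟨i, hi, hQ⟩ := h W hW hP
    simpa [hP, hQ] using single_le_sum (fun j _ => hnonneg j) hi
  · simpa [hP] using sum_nonneg fun i _ => hnonneg i

lemma randomSubsetProb_le_add (hp₀ : 0 ≤ p) (hp₁ : p ≤ 1) {P Q R : Finset α → Prop}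
    (h : ∀ W ⊆ s, P W → Q W ∨ R W) :
    randomSubsetProb s p P ≤ randomSubsetProb s p Q + randomSubsetProb s p R := by
  simpa using randomSubsetProb_le_sum hp₀ hp₁ (univ : Finset Bool)
    (Q := fun b => bif b then Q else R) (by simpa [or_comm] using h)

lemma randomSubsetProb_mono (hp₀ : 0 ≤ p) (hp₁ : p ≤ 1) {P Q : Finset α → Prop}
    (h : ∀ W ⊆ s, P W → Q W) : randomSubsetProb s p P ≤ randomSubsetProb s p Q := by
  simpa using randomSubsetProb_le_sum hp₀ hp₁ (univ : Finset Unit) (Q := fun _ => Q)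
    (by simpa using h)

lemma randomSubsetProb_add_not (P : Finset α → Prop) :
    randomSubsetProb s p P + randomSubsetProb s p (fun W => ¬ P W) = 1 := by
  rw [randomSubsetProb_eq_expect, randomSubsetProb_eq_expect, ← randomSubsetExpect_add]
  convert randomSubsetExpect_const (s := s) (p := p) 1 using 2
  ext W
  by_cases h : P W <;> simp [h]

lemma randomSubsetProb_true : randomSubsetProb s p (fun _ => True) = 1 := by
  rw [randomSubsetProb_eq_expect, ← randomSubsetExpect_const (s := s) (p := p) 1]
  congr 1
  simp only [Set.ofPred_true, Set.indicator_univ, Pi.one_def]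

lemma randomSubsetProb_le_one (hp₀ : 0 ≤ p) (hp₁ : p ≤ 1) (P : Finset α → Prop) :
    randomSubsetProb s p P ≤ 1 :=
  (randomSubsetProb_mono hp₀ hp₁ fun _ _ _ => trivial).trans_eq randomSubsetProb_true

lemma randomSubsetProb_sdiff [DecidableEq α] (P : Finset α → Prop) :
    randomSubsetProb s p (fun W => P (s \ W)) = randomSubsetProb s (1 - p) P := by
  simp only [randomSubsetProb_eq_expect]
  exact randomSubsetExpect_sdiff ({W | P W}.indicator 1)

lemma mul_randomSubsetProb_le (hp₀ : 0 ≤ p) (hp₁ : p ≤ 1) {a : ℝ} {f : Finset α → ℝ}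
    {P : Finset α → Prop} (hf : ∀ W ⊆ s, 0 ≤ f W) (h : ∀ W ⊆ s, P W → a ≤ f W) :
    a * randomSubsetProb s p P ≤ randomSubsetExpect s p f := by
  rw [randomSubsetProb_eq_expect, ← randomSubsetExpect_const_mul]
  refine randomSubsetExpect_mono hp₀ hp₁ fun W hW => ?_
  by_cases hP : P W
  · simpa [hP] using h W hW hP
  · simpa [hP] using hf W hW

lemma randomSubsetProb_card_inter_tail_le [DecidableEq α] (hp₀ : 0 ≤ p) (hp₁ : p ≤ 1)
    (A : Finset α) (l a : ℝ) :
    randomSubsetProb s p (fun W => a ≤ l * #(W ∩ A)) ≤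
      Real.exp (p * #(s ∩ A) * (Real.exp l - 1) - a) := by
  have hmarkov : Real.exp a * randomSubsetProb s p (fun W => a ≤ l * #(W ∩ A)) ≤
      (p * Real.exp l + (1 - p)) ^ #(s ∩ A) := by
    rw [← randomSubsetExpect_pow_card_inter]
    refine mul_randomSubsetProb_le hp₀ hp₁ (fun W _ => by positivity) fun W _ hW => ?_
    rw [← Real.exp_nat_mul, mul_comm _ l]
    exact Real.exp_le_exp.2 hW
  have hbase : p * Real.exp l + (1 - p) ≤ Real.exp (p * (Real.exp l - 1)) := by
    linarith [Real.add_one_le_exp (p * (Real.exp l - 1))]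
  have hbase₀ : 0 ≤ p * Real.exp l + (1 - p) :=
    add_nonneg (by positivity) (sub_nonneg.2 hp₁)
  rw [Real.exp_sub, le_div_iff₀ (Real.exp_pos a), mul_comm]
  calc _ ≤ Real.exp (p * (Real.exp l - 1)) ^ #(s ∩ A) :=
        hmarkov.trans (pow_le_pow_left₀ hbase₀ hbase _)
    _ = Real.exp (p * #(s ∩ A) * (Real.exp l - 1)) := by
        rw [← Real.exp_nat_mul]
        ring_nf

end RandomSubset

section Spread

variable {X ι : Type*} [DecidableEq X] {I : Finset ι} {S : ι → Finset X} {L R : ℝ}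

/-- The indexed family `(S i)_{i ∈ I}` is `R`-spread of mass `L`: at most `L * R ^ (-|T|)` of its
members contain a given set `T`. The usual notion has `L = |I|`; a free mass makes spreadness
inherited by subfamilies. -/
def IsSpread (I : Finset ι) (S : ι → Finset X) (L R : ℝ) : Prop :=
  ∀ T : Finset X, (#{i ∈ I | T ⊆ S i} : ℝ) ≤ L * R⁻¹ ^ #T

/-- `C` is a minimal fragment of `S i` over `W`: it completes `W` to a set containing a member of
the family, and every member contained in `W ∪ C` contains `C`. -/
structure IsFragment (I : Finset ι) (S : ι → Finset X) (W C : Finset X) (i : ι) : Prop where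
  subset : C ⊆ S i
  disjoint : Disjoint W C
  exists_subset : ∃ j ∈ I, S j ⊆ W ∪ C
  subset_of_subset : ∀ j ∈ I, S j ⊆ W ∪ C → C ⊆ S j

lemma exists_isFragment (S : ι → Finset X) (W : Finset X) {i : ι} (hi : i ∈ I) :
    ∃ C, IsFragment I S W C i := by
  obtain ⟨j, hj, hmin⟩ := exists_min_image {j ∈ I | S j ⊆ W ∪ S i} (fun j => #(S j \ W))
    ⟨i, mem_filter.2 ⟨hi, subset_union_right⟩⟩
  obtain ⟨hjI, hji⟩ := mem_filter.1 hj
  refine ⟨S j \ W, sdiff_le_iff.2 hji, disjoint_sdiff, ⟨j, hjI, by simp⟩, fun l hl hlW => ?_⟩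
  have hsub : S l \ W ⊆ S j \ W := sdiff_le_iff.2 hlW
  have hli : S l ⊆ W ∪ S i := sdiff_le_iff.1 (hsub.trans (sdiff_le_iff.2 hji))
  rw [← eq_of_subset_of_card_le hsub (hmin l (mem_filter.2 ⟨hl, hli⟩))]
  exact sdiff_subset

lemma exists_forall_isFragment (I : Finset ι) (S : ι → Finset X) :
    ∃ χ : ι → Finset X → Finset X, ∀ i ∈ I, ∀ W, IsFragment I S W (χ i W) i := by
  have hfragment (i : ι) (W : Finset X) : ∃ C, i ∈ I → IsFragment I S W C i := by
    by_cases hi : i ∈ I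
    · exact (exists_isFragment S W hi).imp fun _ h _ => h
    · exact ⟨∅, fun h => absurd h hi⟩
  choose χ hχ using hfragment
  exact ⟨χ, fun i hi W => hχ i W hi⟩

namespace IsSpread

lemma card_le (hS : IsSpread I S L R) : (#I : ℝ) ≤ L := by
  simpa using hS ∅

lemma mono (hS : IsSpread I S L R) {I' : Finset ι} (hI : I' ⊆ I) {S' : ι → Finset X}
    (hSS : ∀ i ∈ I', S' i ⊆ S i) : IsSpread I' S' L R := fun T => by
  refine le_trans (Nat.cast_le.2 (card_le_card fun i hi => ?_)) (hS T)
  obtain ⟨hi, hT⟩ := mem_filter.1 hi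
  exact mem_filter.2 ⟨hI hi, hT.trans (hSS i hi)⟩

lemma card_not_disjoint_le (hS : IsSpread I S L R) (B : Finset X) :
    (#{i ∈ I | ¬ Disjoint (S i) B} : ℝ) ≤ #B * (L * R⁻¹) := by
  classical
  have hcover : {i ∈ I | ¬ Disjoint (S i) B} ⊆ B.biUnion fun x => {i ∈ I | {x} ⊆ S i} := by
    intro i hi
    obtain ⟨hi, hB⟩ := mem_filter.1 hi
    obtain ⟨x, hxS, hxB⟩ := not_disjoint_iff.1 hB
    exact mem_biUnion.2 ⟨x, hxB, mem_filter.2 ⟨hi, singleton_subset_iff.2 hxS⟩⟩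
  calc (#{i ∈ I | ¬ Disjoint (S i) B} : ℝ)
      ≤ ∑ x ∈ B, (#{i ∈ I | {x} ⊆ S i} : ℝ) :=
        mod_cast (card_le_card hcover).trans card_biUnion_le
    _ ≤ ∑ _x ∈ B, L * R⁻¹ := sum_le_sum fun x _ => by simpa using hS {x}
    _ = #B * (L * R⁻¹) := by rw [sum_const, nsmul_eq_mul]

lemma sum_powerset_le (hS : IsSpread I S L R) (A : Finset X) {z : ℝ} (hz : 0 ≤ z) :
    ∑ i ∈ I, ∑ T ∈ A.powerset with T ⊆ S i, z ^ #T ≤ L * (1 + z / R) ^ #A := by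
  calc ∑ i ∈ I, ∑ T ∈ A.powerset with T ⊆ S i, z ^ #T
      = ∑ T ∈ A.powerset, #{i ∈ I | T ⊆ S i} * z ^ #T := by
        simp only [sum_filter]
        rw [sum_comm]
        refine sum_congr rfl fun T _ => ?_
        rw [← sum_filter, sum_const, nsmul_eq_mul]
    _ ≤ ∑ T ∈ A.powerset, L * R⁻¹ ^ #T * z ^ #T := by
        gcongr with T
        exact hS T
    _ = L * (1 + z / R) ^ #A := by
        rw [add_comm 1, ← sum_pow_mul_eq_add_pow, mul_sum]
        refine sum_congr rfl fun T _ => ?_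
        rw [one_pow, mul_one, div_eq_mul_inv, mul_pow]
        ring

end IsSpread

variable [Fintype X] {p y : ℝ}

-- A pair `(W, T W)` is recovered from `(W ∪ T W, T W)`, and passing from `W` to `W ∪ T W` costs at
-- most a factor `p ^ (-|T W|)`.
lemma randomSubsetExpect_pow_card_le_sum_powerset (hp₀ : 0 < p) (hp₁ : p ≤ 1) (hy : 0 ≤ y)
    {T A : Finset X → Finset X} {C : Finset X} (hdisj : ∀ W, Disjoint W (T W))
    (hTA : ∀ W, T W ⊆ A (W ∪ T W)) (hTC : ∀ W, T W ⊆ C) :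
    randomSubsetExpect univ p (fun W => y ^ #(T W)) ≤
      randomSubsetExpect univ p fun Z => ∑ U ∈ (A Z).powerset with U ⊆ C, (y / p) ^ #U := by
  let encode (W : Finset X) : (_ : Finset X) × Finset X := ⟨W ∪ T W, T W⟩
  let weight (Q : (_ : Finset X) × Finset X) : ℝ :=
    randomSubsetWeight univ p Q.1 * (y / p) ^ #Q.2
  have hencode : Function.Injective encode := by
    intro W W' h
    obtain ⟨hunion, hT⟩ : W ∪ T W = W' ∪ T W' ∧ T W = T W' := by simpa [encode] using h
    rw [← union_sdiff_cancel_right (hdisj W), ← union_sdiff_cancel_right (hdisj W'), hunion, hT]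
  have hweight (Q) : 0 ≤ weight Q :=
    mul_nonneg (randomSubsetWeight_nonneg hp₀.le hp₁ _) (by positivity)
  calc randomSubsetExpect univ p (fun W => y ^ #(T W))
      ≤ ∑ W ∈ univ.powerset, weight (encode W) := by
        refine sum_le_sum fun W _ => ?_
        calc randomSubsetWeight univ p W * y ^ #(T W)
            ≤ randomSubsetWeight univ p (W ∪ T W) * p⁻¹ ^ #(T W) * y ^ #(T W) := by
              gcongr
              exact randomSubsetWeight_le_mul_inv_pow hp₀ hp₁ (hdisj W) (subset_univ _)
          _ = weight (encode W) := by
              rw [mul_assoc, ← mul_pow, inv_mul_eq_div]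
    _ = ∑ Q ∈ univ.powerset.image encode, weight Q := (sum_image hencode.injOn).symm
    _ ≤ ∑ Q ∈ univ.powerset.sigma fun Z => {U ∈ (A Z).powerset | U ⊆ C}, weight Q := by
        refine sum_le_sum_of_subset_of_nonneg (image_subset_iff.2 fun W _ => ?_)
          fun Q _ _ => hweight Q
        simp [encode, hTA W, hTC W]
    _ = _ := by
        rw [sum_sigma]
        simp only [randomSubsetExpect, mul_sum, weight]

lemma randomSubsetExpect_sum_pow_card_fragment_le (hp₀ : 0 < p) (hp₁ : p ≤ 1) (hy : 0 ≤ y)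
    (hR : 0 < R) {k : ℕ} (hS : IsSpread I S L R) (hk : ∀ i ∈ I, #(S i) ≤ k)
    {χ : ι → Finset X → Finset X} (hχ : ∀ i ∈ I, ∀ W, IsFragment I S W (χ i W) i) :
    randomSubsetExpect univ p (fun W => ∑ i ∈ I, y ^ #(χ i W)) ≤
      L * (1 + y / (p * R)) ^ k := by
  have hmember (Z : Finset X) : ∃ A : Finset X, #A ≤ k ∧
      ((∃ j ∈ I, S j ⊆ Z) → ∃ j ∈ I, S j ⊆ Z ∧ A = S j) := by
    by_cases h : ∃ j ∈ I, S j ⊆ Z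
    · obtain ⟨j, hj, hjZ⟩ := h
      exact ⟨S j, hk j hj, fun _ => ⟨j, hj, hjZ, rfl⟩⟩
    · exact ⟨∅, by simp, fun h' => absurd h' h⟩
  choose A hAcard hA using hmember
  have hfragment (i) (hi : i ∈ I) (W) : χ i W ⊆ A (W ∪ χ i W) := by
    obtain ⟨j, hj, hjW, hAj⟩ := hA _ (hχ i hi W).exists_subset
    exact hAj ▸ (hχ i hi W).subset_of_subset j hj hjW
  have hL : 0 ≤ L := (Nat.cast_nonneg _).trans hS.card_le
  calc randomSubsetExpect univ p (fun W => ∑ i ∈ I, y ^ #(χ i W))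
      ≤ ∑ i ∈ I, randomSubsetExpect univ p
          (fun Z => ∑ U ∈ (A Z).powerset with U ⊆ S i, (y / p) ^ #U) := by
        rw [randomSubsetExpect_sum]
        exact sum_le_sum fun i hi => randomSubsetExpect_pow_card_le_sum_powerset hp₀ hp₁ hy
          (fun W => (hχ i hi W).disjoint) (hfragment i hi) fun W => (hχ i hi W).subset
    _ ≤ randomSubsetExpect univ p fun _ => L * (1 + y / (p * R)) ^ k := by
        rw [← randomSubsetExpect_sum]
        refine randomSubsetExpect_mono hp₀.le hp₁ fun Z _ => ?_
        refine (hS.sum_powerset_le (A Z) (by positivity)).trans ?_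
        rw [div_div]
        gcongr
        · exact le_add_of_nonneg_right (by positivity)
        · exact hAcard Z
    _ = _ := randomSubsetExpect_const _

namespace IsSpread

lemma mul_randomSubsetProb_not_exists_subset_le (hp₀ : 0 < p) (hp₁ : p ≤ 1) (hy : 1 ≤ y)
    (hR : 0 < R) {k : ℕ} (hS : IsSpread I S L R) (hk : ∀ i ∈ I, #(S i) ≤ k) :
    #I * y * randomSubsetProb univ p (fun W => ¬ ∃ i ∈ I, S i ⊆ W) ≤
      L * (1 + y / (p * R)) ^ k := by
  obtain ⟨χ, hχ⟩ := exists_forall_isFragment I S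
  have hy₀ : 0 ≤ y := zero_le_one.trans hy
  refine (mul_randomSubsetProb_le hp₀.le hp₁ (f := fun W => ∑ i ∈ I, y ^ #(χ i W))
    (fun W _ => by positivity) fun W _ hW => ?_).trans
    (randomSubsetExpect_sum_pow_card_fragment_le hp₀ hp₁ hy₀ hR hS hk hχ)
  rw [← nsmul_eq_mul, ← sum_const]
  refine sum_le_sum fun i hi => le_self_pow₀ hy fun h => hW ?_
  simpa [card_eq_zero.1 h] using (hχ i hi W).exists_subset

lemma mul_randomSubsetProb_few_small_fragments_le (hp₀ : 0 < p) (hp₁ : p ≤ 1) (hy : 1 ≤ y)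
    (hR : 0 < R) {k : ℕ} (hS : IsSpread I S L R) (hk : ∀ i ∈ I, #(S i) ≤ k) (J : ℕ)
    {χ : ι → Finset X → Finset X} (hχ : ∀ i ∈ I, ∀ W, IsFragment I S W (χ i W) i) :
    #I / 2 * y ^ J * randomSubsetProb univ p (fun W => 2 * #{i ∈ I | #(χ i W) ≤ J} < #I) ≤
      L * (1 + y / (p * R)) ^ k := by
  have hy₀ : 0 ≤ y := zero_le_one.trans hy
  refine (mul_randomSubsetProb_le hp₀.le hp₁ (f := fun W => ∑ i ∈ I, y ^ #(χ i W))
    (fun W _ => by positivity) fun W _ hW => ?_).trans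
    (randomSubsetExpect_sum_pow_card_fragment_le hp₀ hp₁ hy₀ hR hS hk hχ)
  have hlarge : (#I : ℝ) / 2 ≤ #{i ∈ I | ¬ #(χ i W) ≤ J} := by
    have hsplit := card_filter_add_card_filter_not (s := I) fun i => #(χ i W) ≤ J
    rw [div_le_iff₀ two_pos]
    norm_cast
    omega
  calc #I / 2 * y ^ J ≤ #{i ∈ I | ¬ #(χ i W) ≤ J} * y ^ J := by gcongr
    _ = ∑ i ∈ I with ¬ #(χ i W) ≤ J, y ^ J := by rw [sum_const, nsmul_eq_mul]
    _ ≤ ∑ i ∈ I with ¬ #(χ i W) ≤ J, y ^ #(χ i W) :=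
        sum_le_sum fun i hi => pow_le_pow_right₀ hy (not_le.1 (mem_filter.1 hi).2).le
    _ ≤ ∑ i ∈ I, y ^ #(χ i W) :=
        sum_le_sum_of_subset_of_nonneg (filter_subset _ _) fun i _ _ => by positivity

lemma randomSubsetProb_quarter_few_small_fragments_le (hR : 0 < R) {k J : ℕ} (hI : I.Nonempty)
    (hS : IsSpread I S L R) (hL : L ≤ 2 * #I) (hk : ∀ i ∈ I, #(S i) ≤ k)
    (hkJ : 32 * (1 + 8 / R) ^ k ≤ 2 ^ J)
    {χ : ι → Finset X → Finset X} (hχ : ∀ i ∈ I, ∀ W, IsFragment I S W (χ i W) i) :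
    randomSubsetProb univ (1 / 4) (fun W => 2 * #{i ∈ I | #(χ i W) ≤ J} < #I) ≤ 1 / 8 := by
  have : (0 : ℝ) < #I := mod_cast hI.card_pos
  have hpos : (0 : ℝ) < #I / 2 * 2 ^ J := by positivity
  have hR8 : (2 : ℝ) / (1 / 4 * R) = 8 / R := by
    field_simp
    norm_num
  refine le_of_mul_le_mul_left ?_ hpos
  calc _ ≤ L * (1 + 8 / R) ^ k := hR8 ▸ mul_randomSubsetProb_few_small_fragments_le (p := 1 / 4)
          (y := 2) (by norm_num) (by norm_num) (by norm_num) hR hS hk J hχ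
    _ ≤ 2 * #I * (2 ^ J / 32) := by
        gcongr
        linarith
    _ = #I / 2 * 2 ^ J * (1 / 8) := by ring

lemma randomSubsetProb_third_not_exists_subset_le (hR : 0 < R) {J : ℕ} (hI : I.Nonempty)
    (hS : IsSpread I S L R) (hL : L ≤ 4 * #I) (hk : ∀ i ∈ I, #(S i) ≤ J)
    (hJ : (1 + 192 / R) ^ J ≤ 2) :
    randomSubsetProb univ (1 / 3) (fun W => ¬ ∃ i ∈ I, S i ⊆ W) ≤ 1 / 8 := by
  have : (0 : ℝ) < #I := mod_cast hI.card_pos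
  have hpos : (0 : ℝ) < #I * 64 := by positivity
  have hR192 : (64 : ℝ) / (1 / 3 * R) = 192 / R := by
    field_simp
    norm_num
  refine le_of_mul_le_mul_left ?_ hpos
  calc _ ≤ L * (1 + 192 / R) ^ J := hR192 ▸ mul_randomSubsetProb_not_exists_subset_le (p := 1 / 3)
          (y := 64) (by norm_num) (by norm_num) (by norm_num) hR hS hk
    _ ≤ 4 * #I * 2 := by gcongr
    _ = #I * 64 * (1 / 8) := by ring

-- The union of independent `1/4`- and `1/3`-random sets is `1/2`-random. The first round reduces
-- at least half of the members to fragments of size at most `J`; the second round covers one of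
-- these.
lemma randomSubsetProb_half_not_exists_subset_le (hR : 0 < R) {k J : ℕ} (hI : I.Nonempty)
    (hS : IsSpread I S L R) (hL : L ≤ 2 * #I) (hk : ∀ i ∈ I, #(S i) ≤ k)
    (hkJ : 32 * (1 + 8 / R) ^ k ≤ 2 ^ J) (hJ : (1 + 192 / R) ^ J ≤ 2) :
    randomSubsetProb univ (1 / 2) (fun U => ¬ ∃ i ∈ I, S i ⊆ U) ≤ 1 / 4 := by
  obtain ⟨χ, hχ⟩ := exists_forall_isFragment I S
  let few (V : Finset X) : Prop := 2 * #{i ∈ I | #(χ i V) ≤ J} < #I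
  let miss (U : Finset X) : Prop := ¬ ∃ i ∈ I, S i ⊆ U
  have hsecond (V : Finset X) (hV : ¬ few V) :
      randomSubsetProb univ (1 / 3) (fun W => miss (V ∪ W)) ≤ 1 / 8 := by
    let G := {i ∈ I | #(χ i V) ≤ J}
    have hG : (#I : ℝ) ≤ 2 * #G := mod_cast not_lt.1 hV
    have hGne : G.Nonempty := card_pos.1 <| by
      have := hI.card_pos
      have : #I ≤ 2 * #G := not_lt.1 hV
      omega
    have hGS : IsSpread G (χ · V) L R :=
      hS.mono (filter_subset _ _) fun i hi => (hχ i (mem_filter.1 hi).1 V).subset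
    refine (randomSubsetProb_mono (by norm_num) (by norm_num) fun W _ hW => ?_).trans
      (randomSubsetProb_third_not_exists_subset_le hR hGne hGS (by linarith)
        (fun i hi => (mem_filter.1 hi).2) hJ)
    rintro ⟨i, hi, hiW⟩
    obtain ⟨j, hj, hjV⟩ := (hχ i (mem_filter.1 hi).1 V).exists_subset
    exact hW ⟨j, hj, hjV.trans (union_subset_union_right hiW)⟩
  calc randomSubsetProb univ (1 / 2) miss
      = randomSubsetExpect univ (1 / 4) fun V =>
          randomSubsetProb univ (1 / 3) fun W => miss (V ∪ W) := by
        simp only [randomSubsetProb_eq_expect]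
        rw [show (1 / 2 : ℝ) = 1 / 4 + 1 / 3 - 1 / 4 * (1 / 3) by norm_num,
          ← randomSubsetExpect_union]
        rfl
    _ ≤ randomSubsetExpect univ (1 / 4) fun V => 1 / 8 + {V | few V}.indicator 1 V := by
        refine randomSubsetExpect_mono (by norm_num) (by norm_num) fun V _ => ?_
        by_cases hV : few V
        · simpa [hV] using (randomSubsetProb_le_one (by norm_num) (by norm_num) _).trans
            (by norm_num)
        · simpa [hV] using hsecond V hV
    _ ≤ 1 / 8 + 1 / 8 := by
        rw [randomSubsetExpect_add, randomSubsetExpect_const, ← randomSubsetProb_eq_expect]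
        gcongr
        exact randomSubsetProb_quarter_few_small_fragments_le hR hI hS hL hk hkJ hχ
    _ = 1 / 4 := by norm_num

end IsSpread

end Spread

section SpreadKernel

variable {X ι : Type*} [DecidableEq X] {I : Finset ι} {S : ι → Finset X} {L R : ℝ}

lemma IsSpread.card_le_two_mul_card_disjoint (hR : 0 < R) {q : ℕ} (hq : 2 * q ≤ R)
    (hS : IsSpread I S #I R) {B : Finset X} (hB : #B ≤ q) :
    #I ≤ 2 * #{i ∈ I | Disjoint (S i) B} := by
  have hmeet : (#{i ∈ I | ¬ Disjoint (S i) B} : ℝ) ≤ #I / 2 := by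
    calc (#{i ∈ I | ¬ Disjoint (S i) B} : ℝ)
        ≤ #B * (#I * R⁻¹) := hS.card_not_disjoint_le B
      _ ≤ R / 2 * (#I * R⁻¹) := by
          gcongr
          have : (#B : ℝ) ≤ q := mod_cast hB
          linarith
      _ = #I / 2 := by field_simp
  have hsplit := card_filter_add_card_filter_not (s := I) fun i => Disjoint (S i) B
  rw [le_div_iff₀ two_pos] at hmeet
  norm_cast at hmeet
  omega

/-- `B` is an `R`-spread kernel of the family `(S i)_{i ∈ I}`: some nonempty subfamily contains `B`
and is `R`-spread once `B` is removed from its members. -/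
def IsSpreadKernel (I : Finset ι) (S : ι → Finset X) (R : ℝ) (B : Finset X) : Prop :=
  ∃ G ⊆ I, G.Nonempty ∧ (∀ i ∈ G, B ⊆ S i) ∧ IsSpread G (fun i => S i \ B) #G R

lemma IsSpreadKernel.mono {B : Finset X} (hB : IsSpreadKernel I S R B) {I' : Finset ι}
    (hI : I ⊆ I') : IsSpreadKernel I' S R B := by
  obtain ⟨G, hG, h⟩ := hB
  exact ⟨G, hG.trans hI, h⟩

variable [Finite X]

lemma exists_isSpread_sdiff (S : ι → Finset X) (hR : 0 < R) (I : Finset ι) :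
    ∃ B, #I * R⁻¹ ^ #B ≤ (#{i ∈ I | B ⊆ S i} : ℝ) ∧
      IsSpread {i ∈ I | B ⊆ S i} (fun i => S i \ B) #{i ∈ I | B ⊆ S i} R := by
  obtain ⟨B, hB, hmax⟩ := Set.exists_max_image
    {B : Finset X | #I * R⁻¹ ^ #B ≤ (#{i ∈ I | B ⊆ S i} : ℝ)} card (Set.toFinite _) ⟨∅, by simp⟩
  refine ⟨B, hB, fun T => ?_⟩
  rcases T.eq_empty_or_nonempty with rfl | hT
  · simp
  by_cases hBT : Disjoint B T
  · have hgrow : (#{i ∈ I | B ∪ T ⊆ S i} : ℝ) < #I * R⁻¹ ^ #(B ∪ T) := by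
      by_contra! h
      have := hmax (B ∪ T) h
      have := hT.card_pos
      rw [card_union_of_disjoint hBT] at *
      omega
    calc (#{i ∈ {i ∈ I | B ⊆ S i} | T ⊆ S i \ B} : ℝ)
        ≤ #{i ∈ I | B ∪ T ⊆ S i} := by
          gcongr
          intro i hi
          simp only [mem_filter, subset_sdiff, union_subset_iff] at hi ⊢
          exact ⟨hi.1.1, hi.1.2, hi.2.1⟩
      _ ≤ #I * R⁻¹ ^ #B * R⁻¹ ^ #T := by
          rw [mul_assoc, ← pow_add, ← card_union_of_disjoint hBT]
          exact hgrow.le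
      _ ≤ #{i ∈ I | B ⊆ S i} * R⁻¹ ^ #T := by
          gcongr
          exact hB
  · rw [filter_false_of_mem fun i _ hi => hBT (subset_sdiff.1 hi).2.symm]
    simp only [card_empty, Nat.cast_zero]
    positivity

-- Repeatedly extract a maximal dense set `B` together with the members containing it, stopping
-- when `B` is large.
lemma exists_isSpreadKernel_cover (S : ι → Finset X) (hR : 0 < R) (q : ℕ) (I : Finset ι) :
    ∃ 𝒮 : Finset (Finset X), ∃ I' ⊆ I, (∀ i ∈ I, i ∉ I' → ∃ B ∈ 𝒮, B ⊆ S i) ∧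
      (∀ B ∈ 𝒮, #B ≤ q ∧ IsSpreadKernel I S R B) ∧
      (I'.Nonempty → ∃ B, q < #B ∧ (#I' : ℝ) ≤ R ^ #B * #{i ∈ I' | B ⊆ S i}) := by
  classical
  induction I using Finset.strongInduction with
  | H I ih =>
    rcases I.eq_empty_or_nonempty with rfl | hI
    · exact ⟨∅, ∅, by simp⟩
    obtain ⟨B, hB, hspread⟩ := exists_isSpread_sdiff S hR I
    have hIpos : (0 : ℝ) < #I := mod_cast hI.card_pos
    by_cases hq : q < #B
    · refine ⟨∅, I, Subset.rfl, fun i hi hi' => absurd hi hi', by simp, fun _ => ⟨B, hq, ?_⟩⟩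
      rwa [inv_pow, ← div_eq_mul_inv, div_le_iff₀' (by positivity)] at hB
    have hGne : {i ∈ I | B ⊆ S i}.Nonempty := by
      have hpos := hB.trans_lt' (show 0 < #I * R⁻¹ ^ #B by positivity)
      exact card_pos.1 (mod_cast hpos)
    obtain ⟨𝒮, I', hI', hcover, h𝒮, hrest⟩ := ih (I \ {i ∈ I | B ⊆ S i})
      (sdiff_ssubset (filter_subset _ _) hGne)
    refine ⟨insert B 𝒮, I', hI'.trans sdiff_subset, fun i hi hi' => ?_, ?_, hrest⟩
    · by_cases hiB : B ⊆ S i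
      · exact ⟨B, mem_insert_self _ _, hiB⟩
      · obtain ⟨B', hB', hiB'⟩ := hcover i (by simp [hi, hiB]) hi'
        exact ⟨B', mem_insert_of_mem hB', hiB'⟩
    · refine forall_mem_insert _ _ _ |>.2 ⟨⟨not_lt.1 hq, ?_⟩, fun B' hB' => ?_⟩
      · exact ⟨_, filter_subset _ _, hGne, fun i hi => (mem_filter.1 hi).2, hspread⟩
      · exact (h𝒮 B' hB').imp_right fun h => h.mono sdiff_subset

-- A uniformly random set and its complement each contain a member of the respective family with
-- probability at least `3/4`.
lemma IsSpread.exists_disjoint (hR : 0 < R) {k J : ℕ} {κ : Type*} {I' : Finset κ}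
    {S' : κ → Finset X} {L' : ℝ} (hI : I.Nonempty) (hS : IsSpread I S L R) (hL : L ≤ 2 * #I)
    (hk : ∀ i ∈ I, #(S i) ≤ k) (hI' : I'.Nonempty) (hS' : IsSpread I' S' L' R)
    (hL' : L' ≤ 2 * #I') (hk' : ∀ j ∈ I', #(S' j) ≤ k)
    (hkJ : 32 * (1 + 8 / R) ^ k ≤ 2 ^ J) (hJ : (1 + 192 / R) ^ J ≤ 2) :
    ∃ i ∈ I, ∃ j ∈ I', Disjoint (S i) (S' j) := by
  cases nonempty_fintype X
  by_contra! hmeet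
  let miss (U : Finset X) : Prop := ¬ ∃ i ∈ I, S i ⊆ U
  let miss' (U : Finset X) : Prop := ¬ ∃ j ∈ I', S' j ⊆ U
  have hcover (U : Finset X) : miss U ∨ miss' (univ \ U) := by
    by_contra! h
    obtain ⟨⟨i, hi, hiU⟩, j, hj, hjU⟩ := And.intro (not_not.1 h.1) (not_not.1 h.2)
    exact hmeet i hi j hj (disjoint_sdiff.mono hiU hjU)
  have hmiss' : randomSubsetProb univ (1 / 2) (fun U => miss' (univ \ U)) ≤ 1 / 4 := by
    rw [randomSubsetProb_sdiff, sub_half]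
    exact IsSpread.randomSubsetProb_half_not_exists_subset_le hR hI' hS' hL' hk' hkJ hJ
  have hmiss := IsSpread.randomSubsetProb_half_not_exists_subset_le hR hI hS hL hk hkJ hJ
  have hunion := randomSubsetProb_le_add (s := univ) (p := 1 / 2) (by norm_num) (by norm_num)
    (P := fun _ => True) fun U _ _ => hcover U
  rw [randomSubsetProb_true] at hunion
  linarith

-- Restrict both spread subfamilies to the members meeting the other kernel only inside their own,
-- and choose two members that are disjoint outside the kernels.
lemma IsSpreadKernel.le_card_inter (hR : 0 < R) {k q J t : ℕ} (hq : 2 * q ≤ R)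
    (hkJ : 32 * (1 + 8 / R) ^ k ≤ 2 ^ J) (hJ : (1 + 192 / R) ^ J ≤ 2)
    (hk : ∀ i ∈ I, #(S i) ≤ k) (hI : ∀ i ∈ I, ∀ j ∈ I, t ≤ #(S i ∩ S j))
    {B B' : Finset X} (hB : IsSpreadKernel I S R B) (hBq : #B ≤ q)
    (hB' : IsSpreadKernel I S R B') (hBq' : #B' ≤ q) : t ≤ #(B ∩ B') := by
  obtain ⟨G, hGI, hG, -, hspread⟩ := hB
  obtain ⟨G', hGI', hG', -, hspread'⟩ := hB'
  have hhalf := hspread.card_le_two_mul_card_disjoint hR hq hBq'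
  have hhalf' := hspread'.card_le_two_mul_card_disjoint hR hq hBq
  have := hG.card_pos
  have := hG'.card_pos
  obtain ⟨i, hi, j, hj, hij⟩ := (hspread.mono (filter_subset _ _) fun _ _ => Subset.rfl)
    |>.exists_disjoint hR (card_pos.1 (by omega)) (mod_cast hhalf)
      (fun i hi => (card_le_card sdiff_subset).trans (hk i (hGI (mem_filter.1 hi).1)))
      (card_pos.1 (by omega)) (hspread'.mono (filter_subset _ _) fun _ _ => Subset.rfl)
      (mod_cast hhalf')
      (fun j hj => (card_le_card sdiff_subset).trans (hk j (hGI' (mem_filter.1 hj).1))) hkJ hJ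
  obtain ⟨hiG, hiB'⟩ := mem_filter.1 hi
  obtain ⟨hjG', hjB⟩ := mem_filter.1 hj
  refine (hI i (hGI hiG) j (hGI' hjG')).trans (card_le_card fun x hx => ?_)
  rw [disjoint_left] at hij hiB' hjB
  simp only [mem_inter, mem_sdiff] at *
  grind

end SpreadKernel

lemma exists_succ_subset_cover {X : Type*} [DecidableEq X] {𝒮 : Finset (Finset X)} {t q : ℕ}
    (hq : ∀ B ∈ 𝒮, #B ≤ q) (hcross : ∀ B ∈ 𝒮, ∀ B' ∈ 𝒮, t ≤ #(B ∩ B')) {B₀ : Finset X}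
    (hB₀ : B₀ ∈ 𝒮) (hcommon : ∀ T ⊆ B₀, #T = t → ∃ B ∈ 𝒮, ¬ T ⊆ B) :
    ∃ 𝒯 : Finset (Finset X), #𝒯 ≤ 2 ^ q * q ∧ (∀ U ∈ 𝒯, #U = t + 1) ∧
      ∀ B ∈ 𝒮, ∃ U ∈ 𝒯, U ⊆ B := by
  have havoid (T : Finset X) : ∃ B ∈ 𝒮, T ⊆ B₀ → #T = t → ¬ T ⊆ B := by
    by_cases hT : T ⊆ B₀ ∧ #T = t
    · exact (hcommon T hT.1 hT.2).imp fun B hB => ⟨hB.1, fun _ _ => hB.2⟩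
    · exact ⟨B₀, hB₀, fun h h' => absurd ⟨h, h'⟩ hT⟩
  choose A hA hTA using havoid
  refine ⟨(powersetCard t B₀).biUnion fun T => (A T \ T).image (insert · T), ?_, ?_, ?_⟩
  · calc _ ≤ #(powersetCard t B₀) * q := card_biUnion_le_card_mul _ _ _ fun T _ =>
            card_image_le.trans ((card_le_card sdiff_subset).trans (hq _ (hA T)))
      _ ≤ 2 ^ q * q := by
          gcongr
          rw [card_powersetCard]
          exact (Nat.choose_le_two_pow _ _).trans (Nat.pow_le_pow_right two_pos (hq _ hB₀))
  · simp only [mem_biUnion, mem_powersetCard, mem_image, mem_sdiff]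
    rintro _ ⟨T, hT, x, hx, rfl⟩
    rw [card_insert_of_notMem hx.2, hT.2]
  · intro B hB
    obtain ⟨T, hT, hTt⟩ := exists_subset_card_eq (hcross B hB B₀ hB₀)
    obtain ⟨hTB, hTB₀⟩ := subset_inter_iff.1 hT
    obtain ⟨x, hx, hxT⟩ : ∃ x ∈ B ∩ A T, x ∉ T := by
      by_contra! hsub
      have heq : B ∩ A T = T :=
        eq_of_subset_of_card_le hsub (hTt.trans_le (hcross B hB _ (hA T)))
      exact hTA T hTB₀ hTt (heq.ge.trans inter_subset_right)
    obtain ⟨hxB, hxA⟩ := mem_inter.1 hx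
    refine ⟨insert x T, mem_biUnion.2 ⟨T, mem_powersetCard.2 ⟨hTB₀, hTt⟩, ?_⟩, ?_⟩
    · exact mem_image_of_mem _ (mem_sdiff.2 ⟨hxA, hxT⟩)
    · exact insert_subset hxB hTB

lemma factorial_le_three_mul_numDerangements {n : ℕ} (hn : n ≠ 1) :
    n ! ≤ 3 * numDerangements n := by
  induction n using Nat.strong_induction_on with
  | _ n ih =>
    match n with
    | 0 | 2 | 3 => decide
    | m + 4 =>
      have h₂ := ih (m + 2) (by omega) (by omega)
      have h₃ := ih (m + 3) (by omega) (by omega)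
      calc (m + 4)! = (m + 3) * ((m + 2)! + (m + 3)!) := by simp only [Nat.factorial_succ]; ring
        _ ≤ (m + 3) * (3 * numDerangements (m + 2) + 3 * numDerangements (m + 3)) := by gcongr
        _ = 3 * numDerangements (m + 4) := by rw [numDerangements_add_two (m + 2)]; ring

lemma exists_perm_eqOn_eqOn_compl {α : Type*} [Finite α] [DecidableEq α]
    (σ₀ σ : Equiv.Perm α) (I : Finset α) :
    ∃ ρ : Equiv.Perm α, (∀ i ∈ I, ρ i = σ₀ i) ∧ ∀ i ∉ I, σ i ∉ I.image σ₀ → ρ i = σ i := by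
  cases nonempty_fintype α
  have hinj : Set.InjOn (fun i => if i ∈ I then σ₀ i else σ i)
      (univ.filter fun i => i ∈ I ∨ σ i ∉ I.image σ₀) := by
    intro i hi j hj hij
    have := σ.injective.eq_iff (a := i) (b := j)
    have := σ₀.injective.eq_iff (a := i) (b := j)
    simp only [coe_filter, mem_univ, true_and, Set.mem_ofPred_eq, mem_image] at hi hj
    grind
  obtain ⟨g, hg⟩ := exists_equiv_extend_of_card_eq (t := univ) rfl (subset_univ _) hinj
  refine ⟨g.trans (Equiv.subtypeUnivEquiv mem_univ), fun i hi => ?_, fun i hi hσi => ?_⟩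
  · simpa [hi] using hg i (by simp [hi])
  · simpa [hi] using hg i (mem_filter.2 ⟨mem_univ _, .inr hσi⟩)

section Perm

variable {α : Type*} [Fintype α] [DecidableEq α]

/-- The graph `{(i, σ i)}` of the permutation `σ`, through which families of permutations are viewed
as families of sets. -/
def permGraph (σ : Equiv.Perm α) : Finset (α × α) :=
  {x | σ x.1 = x.2}

lemma mem_permGraph {σ : Equiv.Perm α} {x : α × α} : x ∈ permGraph σ ↔ σ x.1 = x.2 := by
  simp [permGraph]

lemma permGraph_eq_map (σ : Equiv.Perm α) :
    permGraph σ = univ.map ⟨fun i => (i, σ i), fun _ _ h => congrArg Prod.fst h⟩ := by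
  ext ⟨i, j⟩
  rw [mem_permGraph, mem_map]
  exact ⟨fun h => ⟨i, mem_univ _, Prod.ext rfl h⟩, fun ⟨_, _, h⟩ => by cases h; rfl⟩

lemma card_permGraph (σ : Equiv.Perm α) : #(permGraph σ) = Fintype.card α := by
  rw [permGraph_eq_map, card_map, card_univ]

lemma card_permGraph_inter (σ π : Equiv.Perm α) :
    #(permGraph σ ∩ permGraph π) = #{i | σ i = π i} := by
  have hfilter : permGraph σ ∩ permGraph π = {x ∈ permGraph σ | σ x.1 = π x.1} := by
    ext x
    simp only [mem_inter, mem_filter, mem_permGraph]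
    grind
  rw [hfilter, permGraph_eq_map, filter_map, card_map]
  rfl

lemma card_image_fst_of_subset_permGraph {σ : Equiv.Perm α} {B : Finset (α × α)}
    (hB : B ⊆ permGraph σ) : #(B.image Prod.fst) = #B :=
  card_image_of_injOn fun x hx y hy hxy => Prod.ext hxy <| by
    rw [← mem_permGraph.1 (hB hx), ← mem_permGraph.1 (hB hy), hxy]

lemma subset_permGraph_iff {σ : Equiv.Perm α} {B : Finset (α × α)} (hB : B ⊆ permGraph σ)
    (π : Equiv.Perm α) : B ⊆ permGraph π ↔ ∀ i ∈ B.image Prod.fst, π i = σ i := by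
  rw [forall_mem_image]
  refine forall₂_congr fun x hx => ?_
  rw [mem_permGraph, mem_permGraph.1 (hB hx)]

lemma card_filter_perm_eqOn (σ : Equiv.Perm α) (I : Finset α) :
    #{π : Equiv.Perm α | ∀ i ∈ I, π i = σ i} = (Fintype.card α - #I)! := by
  have hperm := Fintype.card_congr (Equiv.Perm.subtypeEquivSubtypePerm (· ∉ I))
  rw [Fintype.card_perm, Fintype.card_subtype_compl, Fintype.card_coe, Fintype.card_subtype]
    at hperm
  rw [hperm]
  refine card_equiv (Equiv.mulLeft σ⁻¹) fun π => ?_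
  simp [Equiv.symm_apply_eq]

lemma card_filter_perm_eq_iff_mem (σ : Equiv.Perm α) (I : Finset α) :
    #{π : Equiv.Perm α | ∀ i, π i = σ i ↔ i ∈ I} = numDerangements (Fintype.card α - #I) := by
  have hperm := Fintype.card_congr (derangements.subtypeEquiv (· ∉ I))
  rw [card_derangements_eq_numDerangements, Fintype.card_subtype_compl, Fintype.card_coe,
    Fintype.card_subtype] at hperm
  rw [hperm]
  refine card_equiv (Equiv.mulLeft σ⁻¹) fun π => ?_
  simp [Function.IsFixedPt, Equiv.symm_apply_eq, iff_comm]

lemma card_filter_subset_permGraph_le (B : Finset (α × α)) :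
    #{π : Equiv.Perm α | B ⊆ permGraph π} ≤ (Fintype.card α - #B)! := by
  by_cases h : ∃ σ, B ⊆ permGraph σ
  · obtain ⟨σ, hσ⟩ := h
    simp only [subset_permGraph_iff hσ]
    rw [card_filter_perm_eqOn, card_image_fst_of_subset_permGraph hσ]
  · rw [filter_false_of_mem fun σ _ hσ => h ⟨σ, hσ⟩]
    exact Nat.zero_le _

-- A permutation of `H` agrees with `σ` somewhere off `I`, so it is not a derangement, off `I`, of
-- a permutation extending both `σ₀` on `I` and `σ` where possible.
lemma three_mul_card_le_of_eqOn_of_le_card_eq {σ₀ σ : Equiv.Perm α} {I : Finset α}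
    (hI : Fintype.card α - #I ≠ 1) (hσ : ¬ ∀ i ∈ I, σ i = σ₀ i) {H : Finset (Equiv.Perm α)}
    (hH₀ : ∀ π ∈ H, ∀ i ∈ I, π i = σ₀ i) (hH : ∀ π ∈ H, #I ≤ #{i | π i = σ i}) :
    3 * #H ≤ 2 * (Fintype.card α - #I)! := by
  obtain ⟨ρ, hρ₀, hρ⟩ := exists_perm_eqOn_eqOn_compl σ₀ σ I
  have hsub : H ⊆ ({π | ∀ i ∈ I, π i = ρ i} : Finset (Equiv.Perm α)) \
      ({π | ∀ i, π i = ρ i ↔ i ∈ I} : Finset (Equiv.Perm α)) := by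
    intro π hπ
    obtain ⟨i, hi, hiI⟩ : ∃ i, π i = σ i ∧ i ∉ I := by
      by_contra! hagree
      have heq := eq_of_subset_of_card_le (s := {i | π i = σ i})
        (fun i hi => hagree i (mem_filter.1 hi).2) (hH π hπ)
      refine hσ fun i hi => ?_
      rw [← hH₀ π hπ i hi, (mem_filter.1 (heq.ge hi)).2]
    have hσi : σ i ∉ I.image σ₀ := by
      simp only [mem_image, not_exists, not_and]
      intro j hj hji
      rw [← hH₀ π hπ j hj, ← hi] at hji
      exact hiI (π.injective hji ▸ hj)
    simp only [mem_sdiff, mem_filter, mem_univ, true_and]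
    exact ⟨fun j hj => (hH₀ π hπ j hj).trans (hρ₀ j hj).symm,
      fun h => hiI ((h i).1 (hi.trans (hρ i hiI hσi).symm))⟩
  have hcard := card_le_card hsub
  rw [card_sdiff_of_subset (monotone_filter_right _ fun π _ h i hi => (h i).2 hi),
    card_filter_perm_eqOn, card_filter_perm_eq_iff_mem] at hcard
  have := factorial_le_three_mul_numDerangements hI
  omega

lemma card_le_mul_factorial_of_cover {𝒯 : Finset (Finset (α × α))} {s : ℕ}
    (h𝒯 : ∀ U ∈ 𝒯, #U = s) {F : Finset (Equiv.Perm α)}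
    (hF : ∀ π ∈ F, ∃ U ∈ 𝒯, U ⊆ permGraph π) : #F ≤ #𝒯 * (Fintype.card α - s)! := by
  have hsub : F ⊆ 𝒯.biUnion fun U => {π | U ⊆ permGraph π} := fun π hπ => by
    simpa using hF π hπ
  refine (card_le_card hsub).trans (card_biUnion_le_card_mul _ _ _ fun U hU => ?_)
  exact h𝒯 U hU ▸ card_filter_subset_permGraph_le U

end Perm

section Stability

variable {n t : ℕ} {F : Finset (Equiv.Perm (Fin n))}

lemma exists_not_subset_permGraph_of_not_isTrivial (hF : ¬ IsTrivial t F)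
    {T : Finset (Fin n × Fin n)} (hT : #T = t) {σ₀ : Equiv.Perm (Fin n)} (hσ₀ : T ⊆ permGraph σ₀) :
    ∃ σ ∈ F, ¬ T ⊆ permGraph σ := by
  by_contra! h
  exact hF ⟨T.image Prod.fst, (card_image_fst_of_subset_permGraph hσ₀).trans hT, σ₀,
    fun σ hσ => (subset_permGraph_iff hσ₀ σ).1 (h σ hσ)⟩

lemma three_mul_card_le_of_cover {q : ℕ} (htn : 1 < n - t) (hqn : 2 * (2 ^ q * q) ≤ n - t)
    (hF : IsTIntersecting t F) (hF' : ¬ IsTrivial t F) {𝒮 : Finset (Finset (Fin n × Fin n))}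
    (hq : ∀ B ∈ 𝒮, #B ≤ q) (hcross : ∀ B ∈ 𝒮, ∀ B' ∈ 𝒮, t ≤ #(B ∩ B'))
    {H : Finset (Equiv.Perm (Fin n))} (hHF : H ⊆ F) (hH : ∀ π ∈ H, ∃ B ∈ 𝒮, B ⊆ permGraph π) :
    3 * #H ≤ 2 * (n - t)! := by
  rcases H.eq_empty_or_nonempty with rfl | ⟨σ₀, hσ₀⟩
  · simp
  obtain ⟨B₀, hB₀, hB₀σ⟩ := hH σ₀ hσ₀
  by_cases hcommon : ∃ T ⊆ B₀, #T = t ∧ ∀ B ∈ 𝒮, T ⊆ B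
  · obtain ⟨T, hTB₀, hTt, hT⟩ := hcommon
    have hTσ₀ := hTB₀.trans hB₀σ
    have hI := (card_image_fst_of_subset_permGraph hTσ₀).trans hTt
    obtain ⟨σ, hσ, hTσ⟩ := exists_not_subset_permGraph_of_not_isTrivial hF' hTt hTσ₀
    rw [subset_permGraph_iff hTσ₀] at hTσ
    have h := three_mul_card_le_of_eqOn_of_le_card_eq (H := H)
      (by rw [hI, Fintype.card_fin]; exact htn.ne') hTσ (fun π hπ => ?_)
      fun π hπ => hI.trans_le (hF π (hHF hπ) σ hσ)
    · rwa [hI, Fintype.card_fin] at h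
    · obtain ⟨B, hB, hBπ⟩ := hH π hπ
      exact (subset_permGraph_iff hTσ₀ π).1 ((hT B hB).trans hBπ)
  · push Not at hcommon
    obtain ⟨𝒯, h𝒯, h𝒯t, hcover⟩ := exists_succ_subset_cover hq hcross hB₀ hcommon
    have hcard : #H ≤ #𝒯 * (n - (t + 1))! := by
      have h := card_le_mul_factorial_of_cover (F := H) h𝒯t fun π hπ => by
        obtain ⟨B, hB, hBπ⟩ := hH π hπ
        exact (hcover B hB).imp fun U hU => ⟨hU.1, hU.2.trans hBπ⟩
      rwa [Fintype.card_fin] at h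
    calc 3 * #H ≤ 4 * (#𝒯 * (n - (t + 1))!) := by omega
      _ ≤ 4 * (2 ^ q * q * (n - (t + 1))!) := by gcongr
      _ = 2 * (2 * (2 ^ q * q) * (n - (t + 1))!) := by ring
      _ ≤ 2 * ((n - t) * (n - t - 1)!) := by rw [← Nat.sub_sub]; gcongr
      _ = 2 * (n - t)! := by rw [Nat.mul_factorial_pred (by omega)]

lemma card_le_pow_mul_factorial_of_dense {R : ℝ} (hR : 0 < R) {B : Finset (Fin n × Fin n)}
    (hF : F.Nonempty) (hB : (#F : ℝ) ≤ R ^ #B * #{σ ∈ F | B ⊆ permGraph σ}) :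
    #B ≤ n ∧ (#F : ℝ) ≤ R ^ #B * (n - #B)! := by
  have hne : {σ ∈ F | B ⊆ permGraph σ}.Nonempty := by
    by_contra! h
    rw [h, card_empty, Nat.cast_zero, mul_zero] at hB
    exact hF.card_pos.not_ge (mod_cast hB)
  obtain ⟨σ, hσ⟩ := hne
  refine ⟨(card_le_card (mem_filter.1 hσ).2).trans_eq ?_, hB.trans ?_⟩
  · rw [card_permGraph, Fintype.card_fin]
  · gcongr
    refine (card_le_card (filter_subset_filter _ (subset_univ F))).trans ?_
    simpa using card_filter_subset_permGraph_le B

lemma IsTIntersecting.card_le_of_not_isTrivial {q J : ℕ} {R : ℝ} (hR : 0 < R) (hq : 2 * q ≤ R)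
    (hnJ : 32 * (1 + 8 / R) ^ n ≤ 2 ^ J) (hJ : (1 + 192 / R) ^ J ≤ 2) (htn : 1 < n - t)
    (hqn : 2 * (2 ^ q * q) ≤ n - t)
    (hrest : ∀ b, q < b → b ≤ n → 12 * (R ^ b * (n - b)!) ≤ (n - t)!)
    (hF : IsTIntersecting t F) (hF' : ¬ IsTrivial t F) : (#F : ℝ) ≤ 3 / 4 * (n - t)! := by
  obtain ⟨𝒮, G, hGF, hcover, hkernel, hdense⟩ := exists_isSpreadKernel_cover permGraph hR q F
  have hcross : ∀ B ∈ 𝒮, ∀ B' ∈ 𝒮, t ≤ #(B ∩ B') := fun B hB B' hB' =>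
    (hkernel B hB).2.le_card_inter hR hq hnJ hJ
      (fun σ _ => (card_permGraph σ).trans_le (Fintype.card_fin n).le)
      (fun σ hσ π hπ => (hF σ hσ π hπ).trans_eq (card_permGraph_inter σ π).symm)
      (hkernel B hB).1 (hkernel B' hB').2 (hkernel B' hB').1
  have hcovered : 3 * #(F \ G) ≤ 2 * (n - t)! :=
    three_mul_card_le_of_cover htn hqn hF hF' (fun B hB => (hkernel B hB).1) hcross sdiff_subset
      fun π hπ => hcover π (mem_sdiff.1 hπ).1 (mem_sdiff.1 hπ).2
  have hremainder : 12 * (#G : ℝ) ≤ (n - t)! := by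
    rcases G.eq_empty_or_nonempty with rfl | hG
    · simp
    obtain ⟨B, hqB, hB⟩ := hdense hG
    obtain ⟨hBn, hle⟩ := card_le_pow_mul_factorial_of_dense hR hG hB
    exact (mul_le_mul_of_nonneg_left hle (by norm_num)).trans (hrest _ hqB hBn)
  have hsplit : (#(F \ G) + #G : ℝ) = #F := mod_cast card_sdiff_add_card_eq_card hGF
  have : 3 * (#(F \ G) : ℝ) ≤ 2 * (n - t)! := mod_cast hcovered
  linarith

end Stability

section StabilityNumerics

lemma one_add_pow_le_exp_mul {x : ℝ} (hx : -1 ≤ x) (k : ℕ) : (1 + x) ^ k ≤ Real.exp (k * x) := by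
  rw [Real.exp_nat_mul]
  have : 0 ≤ 1 + x := by linarith
  gcongr
  linarith [Real.add_one_le_exp x]

lemma succ_pow_le_exp_mul_pow {n b : ℕ} (hb : b ≤ n) :
    ((n : ℝ) + 1) ^ b ≤ Real.exp 1 * (n : ℝ) ^ b := by
  rcases n.eq_zero_or_pos with rfl | hn
  · simp [Nat.le_zero.1 hb]
  calc ((n : ℝ) + 1) ^ b = (1 + (n : ℝ)⁻¹) ^ b * n ^ b := by rw [← mul_pow]; field_simp
    _ ≤ (1 + (n : ℝ)⁻¹) ^ n * n ^ b := by gcongr; simp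
    _ ≤ Real.exp 1 * n ^ b := by gcongr; exact Real.one_add_inv_pow_le_exp

lemma pow_mul_factorial_sub_le {n b : ℕ} (hb : b ≤ n) :
    (n : ℝ) ^ b * (n - b)! ≤ Real.exp 1 ^ b * n ! := by
  induction n generalizing b with
  | zero => simp [Nat.le_zero.1 hb]
  | succ n ih =>
    cases b with
    | zero => simp
    | succ b =>
      have hbn := Nat.le_of_succ_le_succ hb
      rw [Nat.add_sub_add_right]
      push_cast [Nat.factorial_succ]
      calc ((n : ℝ) + 1) ^ (b + 1) * (n - b)! = (n + 1) * (n + 1) ^ b * (n - b)! := by ring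
        _ ≤ (n + 1) * (Real.exp 1 * n ^ b) * (n - b)! := by
          gcongr; exact succ_pow_le_exp_mul_pow hbn
        _ = Real.exp 1 * (n + 1) * (n ^ b * (n - b)!) := by ring
        _ ≤ Real.exp 1 * (n + 1) * (Real.exp 1 ^ b * n !) :=
          mul_le_mul_of_nonneg_left (ih hbn) (by positivity)
        _ = Real.exp 1 ^ (b + 1) * ((n + 1) * n !) := by ring

lemma thirtyTwo_mul_one_add_pow_le_two_pow {n : ℕ} {x : ℝ} (hx : 0 < x) (hxn : x ^ 4 = n) :
    32 * (1 + 8 / x ^ 3) ^ n ≤ 2 ^ (16 * ⌈x⌉₊ + 5) := by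
  have hexp : (n : ℝ) * (8 / x ^ 3) ≤ (8 * ⌈x⌉₊ : ℕ) * 1 := by
    rw [← hxn, show x ^ 4 * (8 / x ^ 3) = 8 * x by field_simp]
    push_cast
    linarith [Nat.le_ceil x]
  have hpos : 0 ≤ 8 / x ^ 3 := by positivity
  calc 32 * (1 + 8 / x ^ 3) ^ n ≤ 32 * Real.exp (n * (8 / x ^ 3)) := by
        gcongr; exact one_add_pow_le_exp_mul (by linarith) n
    _ ≤ 32 * Real.exp ((8 * ⌈x⌉₊ : ℕ) * 1) := by gcongr
    _ ≤ 32 * 4 ^ (8 * ⌈x⌉₊) := by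
        rw [Real.exp_nat_mul]
        gcongr
        linarith [Real.exp_one_lt_three]
    _ = 2 ^ (16 * ⌈x⌉₊ + 5) := by
        rw [show (4 : ℝ) = 2 ^ 2 by norm_num, ← pow_mul]
        ring

lemma one_add_pow_le_two {x : ℝ} (hx : 120 ≤ x) :
    (1 + 192 / x ^ 3) ^ (16 * ⌈x⌉₊ + 5) ≤ 2 := by
  have hx₀ : 0 < x := by linarith
  have hexp : ((16 * ⌈x⌉₊ + 5 : ℕ) : ℝ) * (192 / x ^ 3) ≤ Real.log 2 := by
    calc ((16 * ⌈x⌉₊ + 5 : ℕ) : ℝ) * (192 / x ^ 3) ≤ 37 * x * (192 / x ^ 3) := by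
          gcongr
          push_cast
          linarith [Nat.ceil_lt_add_one hx₀.le]
      _ = 7104 / x ^ 2 := by field_simp; norm_num
      _ ≤ 7104 / 120 ^ 2 := by gcongr
      _ ≤ Real.log 2 := by linarith [Real.log_two_gt_d9]
  have hpos : 0 ≤ 192 / x ^ 3 := by positivity
  calc _ ≤ Real.exp (Real.log 2) :=
        (one_add_pow_le_exp_mul (by linarith) _).trans (Real.exp_le_exp.2 hexp)
    _ = 2 := Real.exp_log two_pos

lemma factorial_le_pow_mul_factorial_sub {n t : ℕ} (ht : t ≤ n) : n ! ≤ n ^ t * (n - t)! := by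
  rw [← Nat.factorial_mul_descFactorial ht, mul_comm]
  gcongr
  exact Nat.descFactorial_le_pow n t

lemma twelve_mul_pow_mul_factorial_le {n t b : ℕ} {x : ℝ} (hxn : x ^ 4 = n)
    (hx : 12 * Real.exp 1 ^ (4 * t + 1) ≤ x) (htb : 4 * t < b) (hbn : b ≤ n) :
    12 * ((x ^ 3) ^ b * (n - b)!) ≤ (n - t)! := by
  obtain ⟨c, rfl⟩ := Nat.exists_eq_add_of_lt htb
  have he : 1 ≤ Real.exp 1 := Real.one_le_exp zero_le_one
  have hex : Real.exp 1 ≤ x := by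
    linarith [pow_le_pow_right₀ he (Nat.le_add_left 1 (4 * t)), pow_one (Real.exp 1)]
  have hx₀ : 0 < x := by linarith
  have hfact : (n ! : ℝ) ≤ x ^ (4 * t) * (n - t)! := by
    rw [pow_mul, hxn]
    exact_mod_cast factorial_le_pow_mul_factorial_sub (by omega)
  have hpow := pow_mul_factorial_sub_le hbn
  set b := 4 * t + c + 1
  refine le_of_mul_le_mul_left ?_ (pow_pos hx₀ b)
  calc x ^ b * (12 * ((x ^ 3) ^ b * (n - b)!)) = 12 * ((x ^ 4) ^ b * (n - b)!) := by ring
    _ ≤ 12 * (Real.exp 1 ^ b * (x ^ (4 * t) * (n - t)!)) := by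
        rw [hxn]
        exact mul_le_mul_of_nonneg_left (hpow.trans (by gcongr)) (by norm_num)
    _ = 12 * Real.exp 1 ^ (4 * t + 1) * Real.exp 1 ^ c * (x ^ (4 * t) * (n - t)!) := by
        simp only [b]; ring
    _ ≤ x * x ^ c * (x ^ (4 * t) * (n - t)!) := by gcongr
    _ = x ^ b * (n - t)! := by simp only [b]; ring

end StabilityNumerics

theorem exists_forall_card_le_of_not_isTrivial (t : ℕ) : ∃ n₀ : ℕ, ∀ n ≥ n₀,
    ∀ F : Finset (Equiv.Perm (Fin n)), IsTIntersecting t F → ¬ IsTrivial t F →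
      (#F : ℝ) ≤ 3 / 4 * (n - t)! := by
  have htendsto : Filter.Tendsto (fun n : ℕ => (n : ℝ) ^ (1 / 4 : ℝ)) Filter.atTop Filter.atTop :=
    (tendsto_rpow_atTop (by norm_num)).comp tendsto_natCast_atTop_atTop
  obtain ⟨n₁, hn₁⟩ := Filter.eventually_atTop.1 <| htendsto.eventually_ge_atTop
    (120 + 8 * t + 12 * Real.exp 1 ^ (4 * t + 1))
  refine ⟨max n₁ (t + 2 + 2 * (2 ^ (4 * t) * (4 * t))), fun n hn F hF hF' => ?_⟩
  have hlarge := hn₁ n (le_of_max_le_left hn)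
  have hn₂ := le_of_max_le_right hn
  set x : ℝ := (n : ℝ) ^ (1 / 4 : ℝ) with hx
  have hxn : x ^ 4 = n := by
    rw [hx, ← Real.rpow_natCast, ← Real.rpow_mul n.cast_nonneg]
    norm_num
  have hexp : 0 < 12 * Real.exp 1 ^ (4 * t + 1) := by positivity
  have hx120 : 120 ≤ x := by linarith [t.cast_nonneg (α := ℝ)]
  have hx₀ : 0 < x := by linarith
  refine hF.card_le_of_not_isTrivial (q := 4 * t) (R := x ^ 3) (by positivity) ?_
    (thirtyTwo_mul_one_add_pow_le_two_pow hx₀ hxn) (one_add_pow_le_two hx120) (by omega) (by omega)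
    (fun b htb hbn => twelve_mul_pow_mul_factorial_le hxn (by linarith) htb hbn) hF'
  push_cast
  linarith [le_self_pow₀ (show 1 ≤ x by linarith) three_ne_zero]

section Fingerprint

lemma card_filter_card_le {α : Type*} [Fintype α] (k : ℕ) :
    #{T : Finset α | #T ≤ k} ≤ (Fintype.card α + 1) ^ k := by
  classical
  have hsub : ({T | #T ≤ k} : Finset (Finset α)) ⊆
      (range (k + 1)).biUnion fun i => powersetCard i univ := fun T hT => by
    simpa [Nat.lt_succ_iff] using hT
  calc _ ≤ ∑ i ∈ range (k + 1), #(powersetCard i (univ : Finset α)) :=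
        (card_le_card hsub).trans card_biUnion_le
    _ ≤ ∑ i ∈ range (k + 1), Fintype.card α ^ i * 1 ^ (k - i) * k.choose i := by
        refine sum_le_sum fun i hi => ?_
        rw [card_powersetCard, card_univ, one_pow, mul_one]
        exact (Nat.choose_le_pow _ _).trans <| Nat.le_mul_of_pos_right _ <|
          Nat.choose_pos (Nat.le_of_lt_succ (mem_range.1 hi))
    _ = (Fintype.card α + 1) ^ k := (add_pow _ _ _).symm

-- The matrix `∏ k ∈ S i, (v j k - u i k)`, with `S i` the set where `u i` and `v i` differ, is
-- diagonal and invertible; expanding the product factors it through the subsets of `α`.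
lemma card_le_two_pow_of_exists_eq {ι α K : Type*} [Fintype ι] [Fintype α] [Field K]
    (u v : ι → α → K) (huv : ∀ i j, i ≠ j → ∃ k, u i k ≠ v i k ∧ u i k = v j k) :
    Fintype.card ι ≤ 2 ^ Fintype.card α := by
  classical
  let S (i : ι) : Finset α := {k | u i k ≠ v i k}
  let C : Matrix ι (Finset α) K := .of fun i A => if A ⊆ S i then ∏ k ∈ S i \ A, -u i k else 0
  let D : Matrix (Finset α) ι K := .of fun A j => ∏ k ∈ A, v j k
  have hCD (i j : ι) : (C * D) i j = ∏ k ∈ S i, (v j k + -u i k) := by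
    rw [Matrix.mul_apply, prod_add]
    simp only [C, D, Matrix.of_apply, ite_mul, zero_mul]
    rw [← sum_filter]
    exact sum_congr (by ext A; simp) fun A _ => mul_comm _ _
  have hdiag : C * D = .diagonal fun i => ∏ k ∈ S i, (v i k + -u i k) := by
    ext i j
    rw [hCD, Matrix.diagonal_apply]
    split_ifs with hij
    · rw [hij]
    · obtain ⟨k, hk, hkj⟩ := huv i j hij
      exact prod_eq_zero (mem_filter.2 ⟨mem_univ k, hk⟩) (by rw [hkj, add_neg_cancel])
  have hne (i : ι) : ∏ k ∈ S i, (v i k + -u i k) ≠ 0 := prod_ne_zero_iff.2 fun k hk => by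
    rw [← sub_eq_add_neg, sub_ne_zero]
    exact (mem_filter.1 hk).2.symm
  calc Fintype.card ι = (C * D).rank := by simp [hdiag, Matrix.rank_diagonal, hne]
    _ ≤ C.rank := Matrix.rank_mul_le_left C D
    _ ≤ Fintype.card (Finset α) := C.rank_le_card_width
    _ = 2 ^ Fintype.card α := Fintype.card_finset

lemma exists_subset_forall_exists_not_rel {β γ : Type*} (r : β → γ → Prop) (F : Finset β) :
    ∃ T ⊆ F, (∀ y, (∀ x ∈ T, r x y) → ∀ x ∈ F, r x y) ∧
      ∀ x ∈ T, ∃ y, ¬ r x y ∧ ∀ z ∈ T, z ≠ x → r z y := by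
  classical
  induction F using Finset.strongInduction with
  | H F ih =>
    by_cases hF : ∀ x ∈ F, ∃ y, ¬ r x y ∧ ∀ z ∈ F, z ≠ x → r z y
    · exact ⟨F, Subset.rfl, fun _ => id, hF⟩
    push Not at hF
    obtain ⟨x, hx, hxF⟩ := hF
    obtain ⟨T, hT, hTF, hTr⟩ := ih _ (erase_ssubset hx)
    refine ⟨T, hT.trans (erase_subset _ _), fun y hy z hz => ?_, hTr⟩
    by_contra hzy
    grind

variable {n t : ℕ}

/-- The permutations agreeing in at least `t` places with every member of `T`; a `t`-intersecting
family is maximal exactly when it is a fixed point of this operation. -/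
def agreeingWith (t : ℕ) (T : Finset (Equiv.Perm (Fin n))) : Finset (Equiv.Perm (Fin n)) :=
  {π | ∀ σ ∈ T, t ≤ agreements σ π}

lemma mem_agreeingWith {T : Finset (Equiv.Perm (Fin n))} {π : Equiv.Perm (Fin n)} :
    π ∈ agreeingWith t T ↔ ∀ σ ∈ T, t ≤ agreements σ π := by
  simp [agreeingWith]

lemma agreements_comm (σ π : Equiv.Perm (Fin n)) : agreements σ π = agreements π σ := by
  simp only [agreements, eq_comm]

lemma agreements_self (σ : Equiv.Perm (Fin n)) : agreements σ σ = n := by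
  simp [agreements]

lemma card_le_two_pow_of_agreements_lt {T : Finset (Equiv.Perm (Fin n))}
    {f : Equiv.Perm (Fin n) → Equiv.Perm (Fin n)} (hlt : ∀ σ ∈ T, agreements σ (f σ) < t)
    (hle : ∀ σ ∈ T, ∀ τ ∈ T, σ ≠ τ → t ≤ agreements σ (f τ)) : #T ≤ 2 ^ n := by
  have h := card_le_two_pow_of_exists_eq (fun (σ : T) k => ((σ.1 k : ℕ) : ℚ))
    (fun σ k => ((f σ.1 k : ℕ) : ℚ)) fun σ τ hστ => ?_
  · simpa using h
  obtain ⟨k, hk, hk'⟩ := exists_mem_notMem_of_card_lt_card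
    ((hlt σ σ.2).trans_le (hle σ σ.2 τ τ.2 (Subtype.coe_injective.ne hστ)))
  simp only [mem_filter, mem_univ, true_and] at hk hk'
  exact ⟨k, mod_cast fun h => hk' (Fin.ext h), by rw [hk]⟩

lemma exists_card_le_agreeingWith_eq (t : ℕ) (F : Finset (Equiv.Perm (Fin n))) :
    ∃ T : Finset (Equiv.Perm (Fin n)), #T ≤ 2 ^ n ∧ agreeingWith t T = agreeingWith t F := by
  obtain ⟨T, hTF, hrel, hmin⟩ :=
    exists_subset_forall_exists_not_rel (fun σ π => t ≤ agreements σ π) F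
  choose! f hf using hmin
  refine ⟨T, card_le_two_pow_of_agreements_lt (fun σ hσ => not_le.1 (hf σ hσ).1)
    fun σ hσ τ hτ => (hf τ hτ).2 σ hσ, ?_⟩
  ext π
  simp only [mem_agreeingWith]
  exact ⟨hrel π, fun h σ hσ => h σ (hTF hσ)⟩

lemma IsTIntersecting.exists_agreeingWith_eq_self (htn : t ≤ n) {F : Finset (Equiv.Perm (Fin n))}
    (hF : IsTIntersecting t F) :
    ∃ F', F ⊆ F' ∧ IsTIntersecting t F' ∧ agreeingWith t F' = F' := by
  obtain ⟨M, hFM, hM⟩ := Finite.exists_le_maximal hF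
  refine ⟨M, hFM, hM.prop, Subset.antisymm (fun π hπ => ?_) fun π hπ =>
    mem_agreeingWith.2 fun σ hσ => hM.prop σ hσ π hπ⟩
  rw [mem_agreeingWith] at hπ
  refine hM.le_of_ge ?_ (subset_insert π M) (mem_insert_self π M)
  simp only [IsTIntersecting, forall_mem_insert, agreements_self]
  exact ⟨⟨htn, fun σ hσ => agreements_comm σ π ▸ hπ σ hσ⟩, fun σ hσ => ⟨hπ σ hσ, hM.prop σ hσ⟩⟩

end Fingerprint

section Concentration

variable {X : Type*} [DecidableEq X] {s : Finset X} {p : ℝ}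

lemma randomSubsetProb_card_inter_le_le (hp₀ : 0 ≤ p) (hp₁ : p ≤ 1) (A : Finset X) :
    randomSubsetProb s p (fun W => #(W ∩ A) ≤ 7 / 8 * (p * #(s ∩ A))) ≤
      Real.exp (-(p * #(s ∩ A) / 400)) := by
  have hexp : Real.exp (-1 / 10) - 1 ≤ -9 / 100 := by
    have h := abs_le.1 (Real.abs_exp_sub_one_sub_id_le (x := -1 / 10) (by norm_num [abs_le]))
    linarith [h.2]
  refine (randomSubsetProb_mono hp₀ hp₁ fun W _ h => ?_).trans
    ((randomSubsetProb_card_inter_tail_le hp₀ hp₁ A (-1 / 10)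
      (-1 / 10 * (7 / 8 * (p * #(s ∩ A))))).trans (Real.exp_le_exp.2 ?_))
  · exact mul_le_mul_of_nonpos_left h (by norm_num)
  · linarith [mul_le_mul_of_nonneg_left hexp (mul_nonneg hp₀ (Nat.cast_nonneg #(s ∩ A)))]

lemma randomSubsetProb_le_card_inter_le (hp₀ : 0 ≤ p) (hp₁ : p ≤ 1) {C : Finset X} {K : ℝ}
    (hC : #(s ∩ C) ≤ 3 / 4 * K) :
    randomSubsetProb s p (fun W => 7 / 8 * (p * K) ≤ #(W ∩ C)) ≤ Real.exp (-(p * K / 400)) := by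
  have hexp : Real.exp (1 / 10) - 1 ≤ 11 / 100 := by
    have h := abs_le.1 (Real.abs_exp_sub_one_sub_id_le (x := 1 / 10) (by norm_num [abs_le]))
    linarith [h.2]
  refine (randomSubsetProb_mono hp₀ hp₁ fun W _ h => ?_).trans
    ((randomSubsetProb_card_inter_tail_le hp₀ hp₁ C (1 / 10) (1 / 10 * (7 / 8 * (p * K)))).trans
      (Real.exp_le_exp.2 ?_))
  · exact mul_le_mul_of_nonneg_left h (by norm_num)
  · have hpC := mul_le_mul_of_nonneg_left hC hp₀
    have hpos : 0 ≤ p * #(s ∩ C) := by positivity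
    linarith [mul_le_mul_of_nonneg_left hexp hpos]

lemma randomSubsetProb_exists_card_inter_le_le (hp₀ : 0 ≤ p) (hp₁ : p ≤ 1) {A : Finset X}
    {ι : Type*} {I : Finset ι} {C : ι → Finset X}
    (hC : ∀ i ∈ I, #(s ∩ C i) ≤ 3 / 4 * (#(s ∩ A) : ℝ)) :
    randomSubsetProb s p (fun W => ∃ i ∈ I, #(W ∩ A) ≤ #(W ∩ C i)) ≤
      (#I + 1) * Real.exp (-(p * #(s ∩ A) / 400)) := by
  let a : ℝ := 7 / 8 * (p * #(s ∩ A))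
  calc _ ≤ randomSubsetProb s p (fun W => ∃ i ∈ I, a ≤ #(W ∩ C i)) +
          randomSubsetProb s p (fun W => #(W ∩ A) ≤ a) := by
        refine randomSubsetProb_le_add hp₀ hp₁ fun W _ ⟨i, hi, h⟩ => ?_
        rcases le_total (#(W ∩ A) : ℝ) a with hA | hA
        · exact .inr hA
        · exact .inl ⟨i, hi, hA.trans (mod_cast h)⟩
    _ ≤ ∑ i ∈ I, randomSubsetProb s p (fun W => a ≤ #(W ∩ C i)) +
          Real.exp (-(p * #(s ∩ A) / 400)) :=
        add_le_add (randomSubsetProb_le_sum hp₀ hp₁ I fun _ _ h => h)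
          (randomSubsetProb_card_inter_le_le hp₀ hp₁ A)
    _ ≤ #I • Real.exp (-(p * #(s ∩ A) / 400)) + Real.exp (-(p * #(s ∩ A) / 400)) := by
        gcongr
        exact sum_le_card_nsmul _ _ _ fun i hi =>
          randomSubsetProb_le_card_inter_le hp₀ hp₁ (hC i hi)
    _ = _ := by rw [nsmul_eq_mul]; ring

end Concentration

section SparseFamilies

variable {n t : ℕ}

lemma IsTrivial.mono {F G : Finset (Equiv.Perm (Fin n))} (hG : IsTrivial t G) (hFG : F ⊆ G) :
    IsTrivial t F := by
  obtain ⟨I, hI, x, hx⟩ := hG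
  exact ⟨I, hI, x, fun σ hσ => hx σ (hFG hσ)⟩

lemma IsTIntersecting.mono {F G : Finset (Equiv.Perm (Fin n))} (hG : IsTIntersecting t G)
    (hFG : F ⊆ G) : IsTIntersecting t F :=
  fun σ hσ π hπ => hG σ (hFG hσ) π (hFG hπ)

lemma exists_isTIntersecting_card_eq (htn : t ≤ n) :
    ∃ A : Finset (Equiv.Perm (Fin n)), IsTIntersecting t A ∧ #A = (n - t)! := by
  obtain ⟨I, -, rfl⟩ := exists_subset_card_eq (s := (univ : Finset (Fin n))) (by simpa using htn)
  let A : Finset (Equiv.Perm (Fin n)) := {π | ∀ i ∈ I, π i = (1 : Equiv.Perm (Fin n)) i}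
  refine ⟨A, fun σ hσ π hπ => ?_, ?_⟩
  · refine card_le_card fun i hi => mem_filter.2 ⟨mem_univ i, ?_⟩
    rw [(mem_filter.1 hσ).2 i hi, (mem_filter.1 hπ).2 i hi]
  · convert card_filter_perm_eqOn 1 I
    exact (Fintype.card_fin n).symm

-- A nontrivial maximum family extends to a maximal intersecting one, which is nontrivial, hence
-- small, and of the form `agreeingWith t T`; but `W ∩ A` has more members than that leaves in `W`.
lemma IsTIntersecting.isTrivial_of_forall_card_inter_lt (htn : t ≤ n) {K : ℝ}
    (hK : ∀ F : Finset (Equiv.Perm (Fin n)), IsTIntersecting t F → ¬ IsTrivial t F → #F ≤ K)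
    {W A F : Finset (Equiv.Perm (Fin n))} (hA : IsTIntersecting t A)
    (hW : ∀ T, #T ≤ 2 ^ n → #(agreeingWith t T) ≤ K → #(W ∩ agreeingWith t T) < #(W ∩ A))
    (hF : IsTIntersecting t F) (hFW : F ⊆ W)
    (hmax : ∀ G ⊆ W, IsTIntersecting t G → #G ≤ #F) : IsTrivial t F := by
  by_contra hF'
  obtain ⟨M, hFM, hM, hMfix⟩ := hF.exists_agreeingWith_eq_self htn
  obtain ⟨T, hTcard, hT⟩ := exists_card_le_agreeingWith_eq t M
  rw [hMfix] at hT
  have hlt := hW T hTcard (hT ▸ hK M hM fun h => hF' (h.mono hFM))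
  rw [hT] at hlt
  exact (hmax _ inter_subset_left (hA.mono inter_subset_right)).not_gt
    ((card_le_card (subset_inter hFW hFM)).trans_lt hlt)

lemma one_sub_le_randomSubsetProb_isTrivial (htn : t ≤ n)
    (hstab : ∀ F : Finset (Equiv.Perm (Fin n)), IsTIntersecting t F → ¬ IsTrivial t F →
      (#F : ℝ) ≤ 3 / 4 * (n - t)!) {p : ℝ} (hp₀ : 0 ≤ p) (hp₁ : p ≤ 1) :
    1 - (((n ! : ℝ) + 1) ^ 2 ^ n + 1) * Real.exp (-(p * (n - t)! / 400)) ≤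
      randomSubsetProb (univ : Finset (Equiv.Perm (Fin n))) p
        (fun W => ∀ F ⊆ W, IsTIntersecting t F →
          (∀ G ⊆ W, IsTIntersecting t G → #G ≤ #F) → IsTrivial t F) := by
  classical
  obtain ⟨A, hA, hAcard⟩ := exists_isTIntersecting_card_eq htn
  let 𝒯 : Finset (Finset (Equiv.Perm (Fin n))) :=
    {T | #T ≤ 2 ^ n ∧ (#(agreeingWith t T) : ℝ) ≤ 3 / 4 * (n - t)!}
  let bad (W : Finset (Equiv.Perm (Fin n))) : Prop :=
    ∃ T ∈ 𝒯, #(W ∩ A) ≤ #(W ∩ agreeingWith t T)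
  have h𝒯 : (#𝒯 : ℝ) ≤ ((n ! : ℝ) + 1) ^ 2 ^ n := by
    have hsub : 𝒯 ⊆ univ.filter fun T => #T ≤ 2 ^ n := fun T hT =>
      mem_filter.2 ⟨mem_univ T, (mem_filter.1 hT).2.1⟩
    have h := (card_le_card hsub).trans (card_filter_card_le (2 ^ n))
    rw [Fintype.card_perm, Fintype.card_fin] at h
    exact_mod_cast h
  have hbad : randomSubsetProb univ p bad ≤
      (((n ! : ℝ) + 1) ^ 2 ^ n + 1) * Real.exp (-(p * (n - t)! / 400)) := by
    have h := randomSubsetProb_exists_card_inter_le_le (s := univ) hp₀ hp₁ (A := A) (I := 𝒯)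
      (C := agreeingWith t) fun T hT => by
        rw [univ_inter, univ_inter, hAcard]
        exact (mem_filter.1 hT).2.2
    rw [univ_inter, hAcard] at h
    exact h.trans (by gcongr)
  calc _ ≤ randomSubsetProb univ p (fun W => ¬ bad W) := by
        linarith [randomSubsetProb_add_not (s := univ) (p := p) bad]
    _ ≤ _ := by
        refine randomSubsetProb_mono hp₀ hp₁ fun W _ hW F hFW hF hmax => ?_
        refine IsTIntersecting.isTrivial_of_forall_card_inter_lt htn hstab hA ?_ hF hFW hmax
        intro T hT hTcard
        by_contra! hle
        exact hW ⟨T, mem_filter.2 ⟨mem_univ T, hT, hTcard⟩, hle⟩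

lemma factorial_add_one_pow_add_one_mul_exp_le (hn : 3 ≤ n) {y : ℝ}
    (hy : 2 * n * 2 ^ n * Real.log n ≤ y) :
    (((n ! : ℝ) + 1) ^ 2 ^ n + 1) * Real.exp (-y) ≤ 2 * Real.exp (-n) := by
  have hn₃ : (3 : ℝ) ≤ n := mod_cast hn
  have hn₀ : (0 : ℝ) < n := by linarith
  have hlog : 1 ≤ Real.log n :=
    (Real.le_log_iff_exp_le hn₀).2 (Real.exp_one_lt_three.le.trans hn₃)
  have hpow : (2 : ℝ) ≤ 2 ^ n := le_self_pow₀ one_le_two (by omega)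
  have hfact : (n ! : ℝ) + 1 ≤ n ^ (n + 1) := by
    have h : (n ! : ℝ) ≤ n ^ n := mod_cast n.factorial_le_pow
    have h' : (1 : ℝ) ≤ n ^ n := one_le_pow₀ (by linarith)
    rw [pow_succ]
    nlinarith
  have hcount : ((n ! : ℝ) + 1) ^ 2 ^ n + 1 ≤ 2 * Real.exp (2 ^ n * (n + 1) * Real.log n) := by
    have hone : 1 ≤ Real.exp (2 ^ n * (n + 1) * Real.log n) := Real.one_le_exp (by positivity)
    have hle : ((n ! : ℝ) + 1) ^ 2 ^ n ≤ Real.exp (2 ^ n * (n + 1) * Real.log n) :=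
      calc ((n ! : ℝ) + 1) ^ 2 ^ n ≤ ((n : ℝ) ^ (n + 1)) ^ 2 ^ n := by gcongr
        _ = Real.exp (((n + 1) * 2 ^ n : ℕ) * Real.log n) := by
          rw [Real.exp_nat_mul, Real.exp_log hn₀, pow_mul]
        _ = _ := by push_cast; ring_nf
    linarith
  calc _ ≤ 2 * Real.exp (2 ^ n * (n + 1) * Real.log n) * Real.exp (-y) := by gcongr
    _ = 2 * Real.exp (2 ^ n * (n + 1) * Real.log n - y) := by
      rw [mul_assoc, ← Real.exp_add, sub_eq_add_neg]
    _ ≤ 2 * Real.exp (-n) := by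
      gcongr
      have hmul : (n - 1) * 2 ≤ (n - 1) * (2 ^ n * Real.log n) := by
        gcongr
        · linarith
        · nlinarith
      linarith

end SparseFamilies

theorem sparse_Ellis_Friedgut_Pilpel_general (t : ℕ) {ε : ℝ} (hε : 0 < ε) :
    ∃ n₀ : ℕ, ∀ n : ℕ, n₀ ≤ n → ∀ p : ℝ,
      800 * (n : ℝ) * 2 ^ n * Real.log n / (n - t)! ≤ p → p ≤ 1 →
      1 - ε ≤ randomSubsetProb (univ : Finset (Equiv.Perm (Fin n))) p
        (fun W => ∀ F ⊆ W, IsTIntersecting t F →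
          (∀ G ⊆ W, IsTIntersecting t G → #G ≤ #F) → IsTrivial t F) := by
  obtain ⟨n₁, hstab⟩ := exists_forall_card_le_of_not_isTrivial t
  have htendsto : Filter.Tendsto (fun n : ℕ => Real.exp (-(n : ℝ))) Filter.atTop (nhds 0) :=
    Real.tendsto_exp_neg_atTop_nhds_zero.comp tendsto_natCast_atTop_atTop
  obtain ⟨n₂, hn₂⟩ := Filter.eventually_atTop.1 (htendsto.eventually_le_const (half_pos hε))
  refine ⟨n₁ + n₂ + t + 3, fun n hn p hp hp₁ => ?_⟩
  have hp₀ : 0 ≤ p := hp.trans' (by positivity)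
  rw [div_le_iff₀ (by positivity)] at hp
  have hfail := factorial_add_one_pow_add_one_mul_exp_le (n := n) (by omega)
    (y := p * (n - t)! / 400) (by linarith)
  linarith [one_sub_le_randomSubsetProb_isTrivial (by omega) (hstab n (by omega)) hp₀ hp₁,
    hn₂ n (by omega)]

lemma threshold_le_threshold {n t : ℕ} (htn : 2 * t ≤ n) :
    800 * (n : ℝ) * 2 ^ n * Real.log n / (n - t)! ≤
      800 * (n : ℝ) * 2 ^ (2 * n - 2 * t) * Real.logb 2 n / (n - t)! := by
  have hlog : Real.log n ≤ Real.logb 2 n :=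
    le_div_self (Real.log_natCast_nonneg n) (Real.log_pos one_lt_two)
      (by linarith [Real.log_two_lt_d9])
  gcongr
  · exact one_le_two
  · omega

theorem sparse_Ellis_Friedgut_Pilpel (t : ℕ) (ht : 1 ≤ t) (ε : ℝ) (hε : 0 < ε) :
    ∃ n₀ : ℕ, ∀ n : ℕ, n₀ ≤ n → ∀ p : ℝ,
      800 * (n : ℝ) * (2 : ℝ) ^ (2 * n - 2 * t) * Real.logb 2 n /
          ((n - t).factorial : ℝ) ≤ p →
      p ≤ 1 →
      1 - ε ≤ randomSubsetProb (Finset.univ : Finset (Equiv.Perm (Fin n))) p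
        (fun W => ∀ F ⊆ W, IsTIntersecting t F →
          (∀ G ⊆ W, IsTIntersecting t G → G.card ≤ F.card) → IsTrivial t F) := by
  obtain ⟨n₀, hn₀⟩ := sparse_Ellis_Friedgut_Pilpel_general t hε
  exact ⟨n₀ + 2 * t, fun n hn p hp =>
    hn₀ n (by omega) p ((threshold_le_threshold (by omega)).trans hp)⟩
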